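/- arXiv:2307.03321 — 3 statements merged into one kernel-verified Lean document; each statement's English description precedes it below -/
import Mathlib

section
/- Let ρ be a density matrix, i.e., a positive semidefinite complex matrix indexed by a finite type with trace 1. Then for every complex number u with ‖u‖ < 1, the series ∑_{m=1}^∞ tr(ρ^m)·u^m/m converges and det(1 - u•ρ)⁻¹ = exp(∑_{m=1}^∞ tr(ρ^m)·u^m/m). (Determinant–exponential formula for the density-matrix zeta function ζ_ρ(u) = det(1 - u•ρ)⁻¹.) -/
open ComplexOrder

/-!
By the spectral theorem `ρ` is unitarily conjugate to the diagonal matrix of its eigenvalues `λᵢ`,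
so `det (1 - u • ρ) = ∏ (1 - u λᵢ)` and `tr (ρ ^ m) = ∑ λᵢ ^ m`. The eigenvalues are nonnegative and
sum to `1`, so `‖u λᵢ‖ < 1`, and the Taylor series of `-log (1 - u λᵢ)` converges for each `i`.
Adding these finitely many series gives `∑ m, tr (ρ ^ m) u ^ m / m = ∑ᵢ -log (1 - u λᵢ)`, whose
exponential is `∏ (1 - u λᵢ)⁻¹`.
-/

lemma trace_pow_eq_sum_eigenvalues_pow {ι : Type*} [Fintype ι] [DecidableEq ι]
    {A : Matrix ι ι ℂ} (hA : A.IsHermitian) (m : ℕ) :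
    (A ^ m).trace = ∑ i, (hA.eigenvalues i : ℂ) ^ m := by
  conv_lhs => rw [hA.spectral_theorem]
  rw [← map_pow, Unitary.conjStarAlgAut_apply, Matrix.trace_mul_cycle,
    Unitary.star_mul_self_of_mem (SetLike.coe_mem _), one_mul, Matrix.diagonal_pow, Matrix.trace_diagonal]
  rfl

lemma det_one_sub_smul_eq_prod_eigenvalues {ι : Type*} [Fintype ι] [DecidableEq ι]
    {A : Matrix ι ι ℂ} (hA : A.IsHermitian) (u : ℂ) :
    (1 - u • A).det = ∏ i, (1 - u * (hA.eigenvalues i : ℂ)) := by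
  conv_lhs => rw [hA.spectral_theorem]
  rw [← map_smul, ← map_one (Unitary.conjStarAlgAut ℂ (Matrix ι ι ℂ) hA.eigenvectorUnitary),
    ← map_sub, Unitary.conjStarAlgAut_apply, Matrix.det_mul_right_comm,
    Unitary.mul_star_self_of_mem (SetLike.coe_mem _), one_mul, ← Matrix.diagonal_one, ← Matrix.diagonal_smul,
    Matrix.diagonal_sub, Matrix.det_diagonal]
  rfl

lemma eigenvalues_le_one_of_trace_eq_one {ι : Type*} [Fintype ι] [DecidableEq ι]
    {ρ : Matrix ι ι ℂ} (hρ : ρ.PosSemidef) (htr : ρ.trace = 1) (i : ι) :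
    hρ.isHermitian.eigenvalues i ≤ 1 := by
  have hsum : ∑ j, hρ.isHermitian.eigenvalues j = 1 := by
    have h := hρ.isHermitian.trace_eq_sum_eigenvalues
    rw [htr] at h
    exact Complex.ofReal_injective (by simpa using h.symm)
  rw [← hsum]
  exact Finset.single_le_sum (fun j _ => hρ.eigenvalues_nonneg j) (Finset.mem_univ i)

/-- For a density matrix `ρ` (positive semidefinite, trace 1) and `u : ℂ` with
`‖u‖ < 1`, the series `∑_{m=1}^∞ tr(ρ^m)·u^m/m` converges and
`det(1 - u•ρ)⁻¹ = exp(∑_{m=1}^∞ tr(ρ^m)·u^m/m)`. -/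
theorem zeta_det_exp_formula {ι : Type*} [Fintype ι] [DecidableEq ι]
    (ρ : Matrix ι ι ℂ) (hρ : ρ.PosSemidef) (htr : ρ.trace = 1)
    (u : ℂ) (hu : ‖u‖ < 1) :
    Summable (fun m : ℕ => (ρ ^ (m + 1)).trace * u ^ (m + 1) / (m + 1)) ∧
    ((1 - u • ρ).det)⁻¹ =
      Complex.exp (∑' m : ℕ, (ρ ^ (m + 1)).trace * u ^ (m + 1) / (m + 1)) := by
  have hH := hρ.isHermitian
  have hnorm : ∀ i, ‖u * (hH.eigenvalues i : ℂ)‖ < 1 := fun i => by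
    rw [norm_mul, Complex.norm_of_nonneg (hρ.eigenvalues_nonneg i)]
    exact (mul_le_of_le_one_right (norm_nonneg u)
      (eigenvalues_le_one_of_trace_eq_one hρ htr i)).trans_lt hu
  have hS : HasSum (fun m : ℕ => (ρ ^ (m + 1)).trace * u ^ (m + 1) / (m + 1))
      (∑ i, -Complex.log (1 - u * (hH.eigenvalues i : ℂ))) := by
    have h := hasSum_sum (s := Finset.univ) fun i _ =>
      Complex.hasSum_taylorSeries_neg_log' (hnorm i)
    refine (congrArg (HasSum · _) (funext fun m => ?_)).mpr h
    rw [trace_pow_eq_sum_eigenvalues_pow hH, Finset.sum_mul, Finset.sum_div]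
    refine Finset.sum_congr rfl fun i _ => ?_
    rw [mul_pow, mul_comm]
  refine ⟨hS.summable, ?_⟩
  rw [hS.tsum_eq, Complex.exp_sum, det_one_sub_smul_eq_prod_eigenvalues hH,
    ← Finset.prod_inv_distrib]
  refine Finset.prod_congr rfl fun i _ => ?_
  have hne : 1 - u * (hH.eigenvalues i : ℂ) ≠ 0 := fun h0 => by
    have h1 := hnorm i
    rw [← sub_eq_zero.mp h0, norm_one] at h1
    exact lt_irrefl _ h1
  rw [Complex.exp_neg, Complex.exp_log hne]
end

section
/- Let ρ be a density matrix, i.e., a positive semidefinite complex matrix indexed by a finite type with trace 1. Then for every complex number u with ‖u‖ < 1, det(1 - u•ρ)⁻¹ = ∑_{n=0}^∞ Z_n(ρ)·u^n, where Z_n(ρ) is the cycle index polynomial of the symmetric group S_n evaluated at x_k = tr(ρ^k). That is, ζ_ρ(u) = det(1 - u•ρ)⁻¹ is the generating function of the sequence Z_n(ρ). -/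
/-!
Write `λ_i` for the eigenvalues of `ρ` and `p_k = tr(ρ^k) = ∑ λ_i^k`. The identity rests on the
formal equality `∏ (1 - λ_i X)⁻¹ = exp (∑_{k ≥ 1} p_k X^k / k)`, used one coefficient at a time so
that no infinite product of power series is needed. The coefficient of `X^n` in the finite product
`∏_{k ≤ n} exp (p_k X^k / k)` is `Z_n(ρ)` (`cycleIndexCoeff_eq_coeff`). This product and
`∏ (1 - λ_i X)⁻¹` both have constant term `1`, and their logarithmic derivatives
`∑_{k ≤ n} p_k X^(k-1)` and `∑_i λ_i / (1 - λ_i X) = ∑_{k ≥ 1} p_k X^(k-1)` agree below degree `n`;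
hence the two series agree up to degree `n` (`coeff_eq_of_logDeriv`).

For the analytic part, `det(1 - uρ) = ∏ (1 - λ_i u)`. The `λ_i` are nonnegative with sum `1`, so
`|λ_i u| < 1` and the geometric series multiply as absolutely convergent Cauchy products
(`hasSum_prod_geometric`).
-/

open ComplexOrder

/-- The `n`-th cycle-index coefficient of a matrix `ρ`: the cycle index polynomial of the
symmetric group `S_n` evaluated at `x_k = tr(ρ^k)`, written as a sum over the partitions of `n`
encoded by multiplicities `(j_1, …, j_n)` with `j_1 + 2·j_2 + ⋯ + n·j_n = n` (each `j_k ≤ n`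
automatically, so the multiplicities can be taken in `Fin (n+1)`). -/
noncomputable def cycleIndexCoeff {ι : Type*} [Fintype ι] [DecidableEq ι]
    (ρ : Matrix ι ι ℂ) (n : ℕ) : ℂ :=
  ∑ j ∈ Finset.univ.filter
      (fun j : Fin n → Fin (n + 1) => ∑ k : Fin n, (k.1 + 1) * (j k).1 = n),
    ∏ k : Fin n,
      (ρ ^ (k.1 + 1)).trace ^ (j k).1 /
        (((k.1 + 1) ^ (j k).1 * Nat.factorial (j k).1 : ℕ) : ℂ)

open PowerSeries in
/-- A product of solutions of first-order linear equations `f' = a f` solves the equation whose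
coefficient is the sum of the coefficients: logarithmic derivatives add up. -/
lemma derivative_prod_of_logDeriv {κ : Type*} (s : Finset κ) (f a : κ → ℂ⟦X⟧)
    (h : ∀ i ∈ s, d⁄dX ℂ (f i) = a i * f i) :
    d⁄dX ℂ (∏ i ∈ s, f i) = (∑ i ∈ s, a i) * ∏ i ∈ s, f i := by
  classical
  induction s using Finset.induction_on with
  | empty => simp
  | insert i s hi ih =>
    have h1 := h i (Finset.mem_insert_self i s)
    have h2 := ih fun j hj => h j (Finset.mem_insert_of_mem hj)
    rw [Finset.prod_insert hi, Finset.sum_insert hi, Derivation.leibniz, h1, h2]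
    simp only [smul_eq_mul]
    ring

open PowerSeries in
/-- The first `N + 1` coefficients of a solution of `F' = A F` depend only on its constant term and
on the first `N` coefficients of `A`: comparing coefficients of `X^m` gives the recurrence
`(m + 1) F_{m+1} = ∑_{a+b=m} A_a F_b`. -/
lemma coeff_eq_of_logDeriv {N : ℕ} {F G A B : ℂ⟦X⟧}
    (hF : d⁄dX ℂ F = A * F) (hG : d⁄dX ℂ G = B * G)
    (h0 : coeff 0 F = coeff 0 G) (hAB : ∀ m < N, coeff m A = coeff m B) :
    ∀ m ≤ N, coeff m F = coeff m G := by
  intro m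
  induction m using Nat.strong_induction_on with
  | _ m ih =>
    intro hm
    rcases m with _ | m
    · exact h0
    have h1 := congrArg (coeff m) hF
    have h2 := congrArg (coeff m) hG
    rw [coeff_derivative, coeff_mul] at h1 h2
    have h3 : ∑ p ∈ Finset.HasAntidiagonal.antidiagonal m, coeff p.1 A * coeff p.2 F =
        ∑ p ∈ Finset.HasAntidiagonal.antidiagonal m, coeff p.1 B * coeff p.2 G := by
      refine Finset.sum_congr rfl fun p hp => ?_
      have := Finset.HasAntidiagonal.mem_antidiagonal.mp hp
      rw [hAB p.1 (by omega), ih p.2 (by omega) (by omega)]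
    rw [h3, ← h2] at h1
    exact mul_right_cancel₀ (by exact_mod_cast Nat.succ_ne_zero m) h1

open PowerSeries in
/-- The formal power series `exp (x X ^ (k + 1) / (k + 1))`. -/
noncomputable def expMonomial (x : ℂ) (k : ℕ) : ℂ⟦X⟧ :=
  PowerSeries.mk fun m =>
    if (k + 1) ∣ m then
      x ^ (m / (k + 1)) / (((k + 1) ^ (m / (k + 1)) * Nat.factorial (m / (k + 1)) : ℕ) : ℂ)
    else 0

open PowerSeries in
lemma derivative_expMonomial (x : ℂ) (k : ℕ) :
    d⁄dX ℂ (expMonomial x k) = (C x * X ^ k) * expMonomial x k := by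
  ext m
  rw [coeff_derivative, mul_assoc, coeff_C_mul, coeff_X_pow_mul', expMonomial]
  simp only [coeff_mk]
  by_cases hd : (k + 1) ∣ m + 1
  · obtain ⟨q, hq⟩ := hd
    rcases q with _ | r
    · simp at hq
    have hm : m = k + (k + 1) * r := by
      rw [Nat.mul_succ] at hq; omega
    have hr : (k + 1) * r / (k + 1) = r := Nat.mul_div_cancel_left _ (Nat.succ_pos k)
    have hr' : (m + 1) / (k + 1) = r + 1 := by
      rw [hq]; exact Nat.mul_div_cancel_left _ (Nat.succ_pos k)
    have hc : (m : ℂ) + 1 = ((k : ℂ) + 1) * ((r : ℂ) + 1) := by exact_mod_cast hq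
    have hk : (k : ℂ) + 1 ≠ 0 := by exact_mod_cast Nat.succ_ne_zero k
    have hr1 : (r : ℂ) + 1 ≠ 0 := by exact_mod_cast Nat.succ_ne_zero r
    have hf : (Nat.factorial r : ℂ) ≠ 0 := by exact_mod_cast Nat.factorial_ne_zero r
    have hsub : m - k = (k + 1) * r := by omega
    rw [if_pos ⟨r + 1, hq⟩, if_pos (by omega), hsub, if_pos ⟨r, rfl⟩, hr, hr', hc,
      Nat.factorial_succ]
    push_cast
    field_simp
    ring
  · rw [if_neg hd, zero_mul]
    split_ifs with h1 h2
    · exact absurd (by obtain ⟨r, hr⟩ := h2; exact ⟨r + 1, by rw [Nat.mul_succ]; omega⟩) hd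
    · simp
    · simp

open PowerSeries in
/-- The cycle-index coefficient `Z_n` is read off from `∏_{k ≤ n} exp (tr(ρ^k) X^k / k)`. -/
lemma cycleIndexCoeff_eq_coeff {ι : Type*} [Fintype ι] [DecidableEq ι]
    (ρ : Matrix ι ι ℂ) (n : ℕ) :
    cycleIndexCoeff ρ n =
      coeff n (∏ k : Fin n, expMonomial (ρ ^ (k.1 + 1)).trace k.1) := by
  rw [coeff_prod, cycleIndexCoeff]
  -- A multiplicity vector `j` corresponds to the exponents `(k + 1) * j k`; exponent vectors not of
  -- this form pick a vanishing coefficient.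
  refine Finset.sum_of_injOn
    (fun j => Finsupp.equivFunOnFinite.symm fun k => (k.1 + 1) * (j k).1) ?_ ?_ ?_ ?_
  · intro j _ j' _ h
    funext k
    have := DFunLike.congr_fun h k
    simp only [Finsupp.equivFunOnFinite_symm_apply_apply] at this
    exact Fin.ext (Nat.eq_of_mul_eq_mul_left (Nat.succ_pos _) this)
  · intro j hj
    simp only [Finset.coe_filter, Finset.mem_univ, true_and, Set.mem_ofPred_eq] at hj
    simp [hj]
  · intro l hl hnot
    by_contra hne
    have hdvd : ∀ k : Fin n, (k.1 + 1) ∣ l k := by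
      intro k
      by_contra hk
      exact hne (Finset.prod_eq_zero (Finset.mem_univ k) (by simp [expMonomial, hk]))
    choose q hq using hdvd
    have hsum : ∑ k, l k = n := by
      simpa using (Finset.mem_finsuppAntidiag.mp hl).1
    have hle : ∀ k, q k < n + 1 := by
      intro k
      have h1 : l k ≤ n :=
        (Finset.single_le_sum (f := fun k => l k) (fun _ _ => Nat.zero_le _)
          (Finset.mem_univ k)).trans_eq hsum
      have h2 : q k ≤ l k := by rw [hq k]; exact Nat.le_mul_of_pos_left _ (Nat.succ_pos _)
      omega
    refine hnot ⟨fun k => ⟨q k, hle k⟩, ?_, ?_⟩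
    · simp only [Finset.coe_filter, Finset.mem_univ, true_and, Set.mem_ofPred_eq, ← hq]
      exact hsum
    · ext k
      simp [hq]
  · intro j _
    refine Finset.prod_congr rfl fun k _ => ?_
    simp [expMonomial]

open PowerSeries in
lemma derivative_geometric (c : ℂ) :
    d⁄dX ℂ (PowerSeries.mk fun n => c ^ n) =
      (PowerSeries.mk fun n => c ^ (n + 1)) * PowerSeries.mk fun n => c ^ n := by
  ext m
  rw [coeff_derivative, coeff_mul]
  simp only [coeff_mk]
  rw [Finset.sum_congr rfl (g := fun _ => c ^ (m + 1))]
  · simp [mul_comm]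
  · intro p hp
    rw [← pow_add, ← Finset.HasAntidiagonal.mem_antidiagonal.mp hp]
    congr 1
    omega

open PowerSeries in
/-- A product of geometric series converges absolutely on the common disc of convergence, with
the expected sum, by Mertens' theorem on Cauchy products. -/
lemma hasSum_prod_geometric {κ : Type*} (s : Finset κ) (c : κ → ℂ) (u : ℂ)
    (h : ∀ i ∈ s, ‖c i * u‖ < 1) :
    Summable (fun n => ‖coeff n (∏ i ∈ s, PowerSeries.mk fun n => c i ^ n) * u ^ n‖) ∧
    HasSum (fun n => coeff n (∏ i ∈ s, PowerSeries.mk fun n => c i ^ n) * u ^ n)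
      (∏ i ∈ s, (1 - c i * u))⁻¹ := by
  classical
  induction s using Finset.induction_on with
  | empty =>
    have h0 : ∀ n, n ≠ 0 → coeff n (1 : ℂ⟦X⟧) * u ^ n = 0 := fun n hn => by
      simp [coeff_one, hn]
    constructor
    · refine summable_of_ne_finset_zero (s := {0}) fun n hn => ?_
      rw [Finset.prod_empty, h0 n (by simpa using hn), norm_zero]
    · simpa using hasSum_single 0 h0
  | insert i s hi ih =>
    obtain ⟨hs, hsum⟩ := ih fun j hj => h j (Finset.mem_insert_of_mem hj)
    have hi1 := h i (Finset.mem_insert_self i s)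
    have hg : Summable fun n => ‖(c i * u) ^ n‖ := by
      simpa using summable_geometric_of_lt_one (norm_nonneg _) hi1
    have hterm : ∀ n, coeff n (∏ j ∈ insert i s, PowerSeries.mk fun n => c j ^ n) * u ^ n =
        ∑ p ∈ Finset.HasAntidiagonal.antidiagonal n, (c i * u) ^ p.1 *
          (coeff p.2 (∏ j ∈ s, PowerSeries.mk fun n => c j ^ n) * u ^ p.2) := by
      intro n
      rw [Finset.prod_insert hi, coeff_mul, Finset.sum_mul]
      refine Finset.sum_congr rfl fun p hp => ?_
      rw [← Finset.HasAntidiagonal.mem_antidiagonal.mp hp, coeff_mk, pow_add, mul_pow]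
      ring
    simp only [hterm]
    have hS := summable_norm_sum_mul_antidiagonal_of_summable_norm hg hs
    refine ⟨hS, ?_⟩
    have := tsum_mul_tsum_eq_tsum_sum_antidiagonal_of_summable_norm hg hs
    rw [hsum.tsum_eq, tsum_geometric_of_norm_lt_one hi1] at this
    rw [Finset.prod_insert hi, mul_inv, this]
    exact hS.of_norm.hasSum

open Unitary in
lemma trace_pow_eq_sum_eigenvalues {ι : Type*} [Fintype ι] [DecidableEq ι]
    {ρ : Matrix ι ι ℂ} (hρ : ρ.IsHermitian) (k : ℕ) :
    (ρ ^ k).trace = ∑ i, (hρ.eigenvalues i : ℂ) ^ k := by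
  conv_lhs => rw [hρ.spectral_theorem]
  rw [← map_pow, conjStarAlgAut_apply, Matrix.trace_mul_comm, ← mul_assoc]
  simp [Matrix.diagonal_pow, Matrix.trace_diagonal]

open Unitary in
lemma det_one_sub_smul_eq_prod {ι : Type*} [Fintype ι] [DecidableEq ι]
    {ρ : Matrix ι ι ℂ} (hρ : ρ.IsHermitian) (u : ℂ) :
    (1 - u • ρ).det = ∏ i, (1 - (hρ.eigenvalues i : ℂ) * u) := by
  conv_lhs => rw [hρ.spectral_theorem]
  rw [← map_smul, ← map_one (conjStarAlgAut ℂ (Matrix ι ι ℂ) hρ.eigenvectorUnitary), ← map_sub,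
    conjStarAlgAut_apply, Matrix.det_mul_comm, ← mul_assoc, ← Matrix.diagonal_one,
    ← Matrix.diagonal_smul, Matrix.diagonal_sub]
  simp [Matrix.det_diagonal, mul_comm]

open PowerSeries in
/-- `Z_n(ρ)` is the complete homogeneous symmetric polynomial of degree `n` in the eigenvalues,
expressed as a coefficient of `∏ (1 - λ_i X)⁻¹`. -/
lemma cycleIndexCoeff_eq_coeff_prod_geometric {ι : Type*} [Fintype ι] [DecidableEq ι]
    {ρ : Matrix ι ι ℂ} (hρ : ρ.IsHermitian) (n : ℕ) :
    cycleIndexCoeff ρ n =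
      coeff n (∏ i, PowerSeries.mk fun m => (hρ.eigenvalues i : ℂ) ^ m) := by
  rw [cycleIndexCoeff_eq_coeff]
  refine coeff_eq_of_logDeriv (N := n)
    (derivative_prod_of_logDeriv _ _ _ fun k _ => derivative_expMonomial _ _)
    (derivative_prod_of_logDeriv _ _ _ fun i _ => derivative_geometric _) ?_ ?_ n le_rfl
  · simp [map_prod, expMonomial, ← coeff_zero_eq_constantCoeff_apply]
  · intro m hm
    -- Both logarithmic derivatives have `tr(ρ^(m+1))` as their coefficient of `X^m`.
    rw [map_sum, map_sum, Finset.sum_eq_single (⟨m, hm⟩ : Fin n)]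
    · simp only [coeff_C_mul, coeff_X_pow, coeff_mk, trace_pow_eq_sum_eigenvalues hρ, if_true,
        mul_one]
    · intro k _ hk
      have : m ≠ k.1 := fun h => hk (Fin.ext h.symm)
      simp [coeff_C_mul, coeff_X_pow, this]
    · simp

lemma eigenvalue_le_one {ι : Type*} [Fintype ι] [DecidableEq ι]
    {ρ : Matrix ι ι ℂ} (hρ : ρ.PosSemidef) (htr : ρ.trace = 1) (i : ι) :
    hρ.1.eigenvalues i ≤ 1 := by
  have h : ∑ i, hρ.1.eigenvalues i = 1 := by
    have := hρ.1.trace_eq_sum_eigenvalues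
    rw [htr] at this
    exact Complex.ofReal_injective (by push_cast; exact this.symm)
  exact h ▸ Finset.single_le_sum (fun j _ => hρ.eigenvalues_nonneg j) (Finset.mem_univ i)

/-- For a density matrix `ρ` and `‖u‖ < 1`, the zeta function
`ζ_ρ(u) = det(1 - u•ρ)⁻¹` is the generating function of the cycle-index coefficients:
`det(1 - u•ρ)⁻¹ = ∑_{n=0}^∞ Z_n(ρ)·u^n`. -/
theorem zeta_generating_function_cycle_index {ι : Type*} [Fintype ι] [DecidableEq ι]
    (ρ : Matrix ι ι ℂ) (hρ : ρ.PosSemidef) (htr : ρ.trace = 1)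
    (u : ℂ) (hu : ‖u‖ < 1) :
    HasSum (fun n : ℕ => cycleIndexCoeff ρ n * u ^ n) ((1 - u • ρ).det)⁻¹ := by
  rw [det_one_sub_smul_eq_prod hρ.1]
  simp only [cycleIndexCoeff_eq_coeff_prod_geometric hρ.1]
  refine (hasSum_prod_geometric Finset.univ _ u fun i _ => ?_).2
  rw [norm_mul, Complex.norm_real, Real.norm_of_nonneg (hρ.eigenvalues_nonneg i)]
  exact (mul_le_of_le_one_left (norm_nonneg u) (eigenvalue_le_one hρ htr i)).trans_lt hu
end

section
/- Let ψ : A × B → ℂ be a bipartite pure state on finite index types A and B, i.e., ∑_{i,j} ‖ψ(i,j)‖² = 1, and let ρ_B be its reduced density matrix, defined by (ρ_B)_{j,j'} := ∑_{i ∈ A} ψ(i,j)·conj(ψ(i,j')). Then ψ is a product state (there exist vectors a : A → ℂ and b : B → ℂ with ψ(i,j) = a(i)·b(j) for all i, j) if and only if Z_n(ρ_B) = 1 for every n ≥ 0, where Z_n denotes the n-th cycle-index coefficient. -/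
/-!
A product state has `ρ_B` proportional to `b b^*`, hence idempotent, so that `tr(ρ_B^k) = 1` for all
`k ≥ 1`. Then `Z_n(ρ_B)` is the sum of `1 / ∏_k k^{j_k} j_k!` over all cycle types of `S_n`, i.e.
the total proportion of permutations over all cycle types, which is `1` (`sum_cycleWeight`). This
identity is proved by strong induction from the recursion `n Z_n = Z_{n-1} + ⋯ + Z_0`.

Conversely, already `Z_2(ρ_B) = (1 + tr(ρ_B^2)) / 2 = 1` gives purity `tr(ρ_B^2) = 1`. The sum of
`|ψ(i,j) ψ(i',j') - ψ(i,j') ψ(i',j)|^2` over all indices equals `2 ((tr ρ_B)^2 - tr(ρ_B^2)) = 0`, so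
every `2 × 2` minor of `ψ` vanishes and `ψ` has rank one.
-/

open ComplexOrder

/-- The reduced density matrix `ρ_B = tr_A |ψ⟩⟨ψ|` of a bipartite pure state `ψ : A × B → ℂ`:
`(ρ_B)_{j,j'} = ∑_{i ∈ A} ψ(i,j)·conj(ψ(i,j'))`. -/
noncomputable def reducedDensity {A B : Type*} [Fintype A] (ψ : A × B → ℂ) :
    Matrix B B ℂ :=
  Matrix.of fun j j' => ∑ i : A, ψ (i, j) * (starRingEnd ℂ) (ψ (i, j'))

/-- The multiplicity vectors `j` with `∑ k, (k + 1) * j k = n`, where `k : Fin N` stands for cycles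
of length `k + 1`. The bound `j k ≤ N` only serves to obtain a finite set; it loses nothing as long
as `n ≤ N` (see `mem_cycleTypes`). -/
def cycleTypes (N n : ℕ) : Finset (Fin N → ℕ) :=
  (Fintype.piFinset fun _ : Fin N => Finset.range (N + 1)).filter
    fun j => ∑ k : Fin N, (k.1 + 1) * j k = n

/-- The proportion `1 / ∏ k, (k + 1) ^ (j k) * (j k)!` of permutations with cycle type `j`. -/
noncomputable def cycleWeight {N : ℕ} (j : Fin N → ℕ) : ℂ :=
  ∏ k : Fin N, 1 / (((k.1 + 1) ^ j k * Nat.factorial (j k) : ℕ) : ℂ)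

lemma le_of_weighted_sum {N n : ℕ} {j : Fin N → ℕ}
    (h : ∑ k : Fin N, (k.1 + 1) * j k = n) (k : Fin N) : (k.1 + 1) * j k ≤ n := by
  rw [← h]
  exact Finset.single_le_sum (f := fun k : Fin N => (k.1 + 1) * j k)
    (fun _ _ => Nat.zero_le _) (Finset.mem_univ k)

lemma mem_cycleTypes {N n : ℕ} (hn : n ≤ N) {j : Fin N → ℕ} :
    j ∈ cycleTypes N n ↔ ∑ k : Fin N, (k.1 + 1) * j k = n := by
  simp only [cycleTypes, Finset.mem_filter, Fintype.mem_piFinset, Finset.mem_range,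
    and_iff_right_iff_imp]
  intro h k
  have := le_of_weighted_sum h k
  nlinarith

lemma weighted_sum_add_single {N : ℕ} (j : Fin N → ℕ) (k : Fin N) :
    ∑ l : Fin N, (l.1 + 1) * (j + Pi.single k 1 : Fin N → ℕ) l
      = ∑ l : Fin N, (l.1 + 1) * j l + (k.1 + 1) := by
  simp [mul_add, Finset.sum_add_distrib, Pi.single_apply]

lemma cycleWeight_add_single {N : ℕ} (j : Fin N → ℕ) (k : Fin N) :
    ((k.1 + 1 : ℕ) : ℂ) * ((j k + 1 : ℕ) : ℂ) * cycleWeight (j + Pi.single k 1)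
      = cycleWeight j := by
  unfold cycleWeight
  rw [← Finset.mul_prod_erase _ _ (Finset.mem_univ k),
    ← Finset.mul_prod_erase _ _ (Finset.mem_univ k), ← mul_assoc]
  congr 1
  · have h1 : ((k.1 + 1 : ℕ) : ℂ) ≠ 0 := Nat.cast_ne_zero.2 (Nat.succ_ne_zero _)
    have h2 : ((j k + 1 : ℕ) : ℂ) ≠ 0 := Nat.cast_ne_zero.2 (Nat.succ_ne_zero _)
    have h3 : ((Nat.factorial (j k) : ℕ) : ℂ) ≠ 0 :=
      Nat.cast_ne_zero.2 (Nat.factorial_ne_zero _)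
    simp only [Pi.add_apply, Pi.single_eq_same, Nat.factorial_succ, pow_succ]
    simp only [Nat.cast_mul, Nat.cast_pow]
    field_simp
  · refine Finset.prod_congr rfl fun l hl => ?_
    simp [Pi.single_eq_of_ne (Finset.ne_of_mem_erase hl)]

/-- Marking a point in a cycle of length `k + 1` and removing that cycle: the `k`-th term of the
recursion `n Z_n = Z_{n-1} + ⋯ + Z_0`. -/
lemma sum_mul_cycleWeight {N n : ℕ} (hn : n ≤ N) (k : Fin N) :
    ∑ j ∈ cycleTypes N n, ((k.1 + 1 : ℕ) : ℂ) * (j k : ℂ) * cycleWeight j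
      = if k.1 < n then ∑ j ∈ cycleTypes N (n - (k.1 + 1)), cycleWeight j else 0 := by
  split_ifs with hk
  · -- Vectors with `j k = 0` contribute nothing; the others are `j' + e_k`.
    rw [← Finset.sum_filter_of_ne (p := fun j => j k ≠ 0)
      (by intro j _ h h0; simp [h0] at h)]
    symm
    refine Finset.sum_bij' (fun j _ => j + Pi.single k 1) (fun j _ => j - Pi.single k 1)
      ?_ ?_ ?_ ?_ ?_
    · intro j hj
      rw [mem_cycleTypes (by omega)] at hj
      rw [Finset.mem_filter, mem_cycleTypes hn, weighted_sum_add_single]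
      refine ⟨by omega, by simp⟩
    · intro j hj
      rw [Finset.mem_filter, mem_cycleTypes hn] at hj
      rw [mem_cycleTypes (by omega)]
      have h := weighted_sum_add_single (j - Pi.single k 1 : Fin N → ℕ) k
      rw [tsub_add_cancel_of_le, hj.1] at h
      · omega
      · intro l
        by_cases hl : l = k
        · subst hl; simpa [Nat.one_le_iff_ne_zero] using hj.2
        · simp [hl]
    · intro j _
      simp
    · intro j hj
      rw [Finset.mem_filter] at hj
      refine tsub_add_cancel_of_le fun l => ?_
      by_cases hl : l = k
      · subst hl; simpa [Nat.one_le_iff_ne_zero] using hj.2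
      · simp [hl]
    · intro j _
      rw [← cycleWeight_add_single j k]
      simp
  · refine Finset.sum_eq_zero fun j hj => ?_
    rw [mem_cycleTypes hn] at hj
    have h := le_of_weighted_sum hj k
    have : j k = 0 := by
      by_contra h0
      have := Nat.pos_of_ne_zero h0
      nlinarith
    simp [this]

/-- The proportions of all cycle types of `S_n` add up to one. -/
lemma sum_cycleWeight (N n : ℕ) (hn : n ≤ N) : ∑ j ∈ cycleTypes N n, cycleWeight j = 1 := by
  induction n using Nat.strong_induction_on with
  | _ n ih =>
    rcases Nat.eq_zero_or_pos n with rfl | hpos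
    · have : cycleTypes N 0 = {0} := by
        ext j
        rw [mem_cycleTypes hn]
        simp [funext_iff]
      rw [this]
      simp [cycleWeight]
    · have hn0 : (n : ℂ) ≠ 0 := Nat.cast_ne_zero.2 hpos.ne'
      apply mul_left_cancel₀ hn0
      calc (n : ℂ) * ∑ j ∈ cycleTypes N n, cycleWeight j
          = ∑ j ∈ cycleTypes N n, ∑ k : Fin N,
              ((k.1 + 1 : ℕ) : ℂ) * (j k : ℂ) * cycleWeight j := by
            rw [Finset.mul_sum]
            refine Finset.sum_congr rfl fun j hj => ?_
            rw [mem_cycleTypes hn] at hj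
            rw [← Finset.sum_mul, ← hj]
            push_cast
            rfl
        _ = ∑ k : Fin N, if k.1 < n then (1 : ℂ) else 0 := by
            rw [Finset.sum_comm]
            refine Finset.sum_congr rfl fun k _ => ?_
            rw [sum_mul_cycleWeight hn]
            split_ifs with hk
            · exact ih _ (by omega) (by omega)
            · rfl
        _ = (n : ℂ) * 1 := by
            rw [Fin.sum_univ_eq_sum_range (fun k => if k < n then (1 : ℂ) else 0) N,
              ← Finset.sum_filter, mul_one, Finset.sum_const, nsmul_eq_mul, mul_one]
            have : (Finset.range N).filter (fun k => k < n) = Finset.range n := by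
              ext k; simp; omega
            rw [this, Finset.card_range]

lemma cycleIndexCoeff_eq_one_of_trace_pow {ι : Type*} [Fintype ι] [DecidableEq ι]
    (ρ : Matrix ι ι ℂ) (h : ∀ k : ℕ, (ρ ^ (k + 1)).trace = 1) (n : ℕ) :
    cycleIndexCoeff ρ n = 1 := by
  rw [← sum_cycleWeight n n le_rfl]
  unfold cycleIndexCoeff
  refine Finset.sum_bij (fun j _ k => (j k).1) ?_ ?_ ?_ ?_
  · intro j hj
    rw [mem_cycleTypes le_rfl]
    simpa using hj
  · intro j _ j' _ hjj
    funext k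
    exact Fin.ext (congrFun hjj k)
  · intro j hj
    simp only [cycleTypes, Finset.mem_filter, Fintype.mem_piFinset, Finset.mem_range] at hj
    exact ⟨fun k => ⟨j k, hj.1 k⟩, by simpa using hj.2, rfl⟩
  · intro j _
    simp only [h, one_pow]
    rfl

lemma cycleIndexCoeff_two {ι : Type*} [Fintype ι] [DecidableEq ι] (ρ : Matrix ι ι ℂ) :
    cycleIndexCoeff ρ 2 = (ρ.trace ^ 2 + (ρ ^ 2).trace) / 2 := by
  have : (Finset.univ.filter
      (fun j : Fin 2 → Fin (2 + 1) => ∑ k : Fin 2, (k.1 + 1) * (j k).1 = 2))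
      = {![2, 0], ![0, 1]} := by decide
  unfold cycleIndexCoeff
  rw [this, Finset.sum_pair (by decide)]
  simp [Fin.prod_univ_two]
  ring

lemma trace_reducedDensity {A B : Type*} [Fintype A] [Fintype B]
    (ψ : A × B → ℂ) (hψ : ∑ p : A × B, ‖ψ p‖ ^ 2 = 1) : (reducedDensity ψ).trace = 1 := by
  simp only [Matrix.trace, reducedDensity, Matrix.diag_apply, Matrix.of_apply]
  rw [Finset.sum_comm, ← Fintype.sum_prod_type (f := fun p => ψ p * (starRingEnd ℂ) (ψ p))]
  simp only [Complex.mul_conj']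
  exact_mod_cast hψ

/-- Lagrange's identity: the total squared modulus of the `2 × 2` minors of `ψ` measures the
defect of purity of the reduced density matrix. -/
lemma sum_norm_minor_sq {A B : Type*} [Fintype A] [Fintype B] [DecidableEq B] (ψ : A × B → ℂ) :
    ((∑ i : A, ∑ i' : A, ∑ j : B, ∑ j' : B,
        ‖ψ (i, j) * ψ (i', j') - ψ (i, j') * ψ (i', j)‖ ^ 2 : ℝ) : ℂ)
      = 2 * ((reducedDensity ψ).trace ^ 2 - (reducedDensity ψ ^ 2).trace) := by
  have e1 : (reducedDensity ψ).trace ^ 2 = ∑ i : A, ∑ i' : A, ∑ j : B, ∑ j' : B,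
      (ψ (i, j) * star (ψ (i, j))) * (ψ (i', j') * star (ψ (i', j'))) := by
    have : (reducedDensity ψ).trace = ∑ i : A, ∑ j : B, ψ (i, j) * star (ψ (i, j)) := by
      rw [Finset.sum_comm]; rfl
    rw [this, sq, Finset.sum_mul_sum]
    simp only [Finset.sum_mul_sum]
  have e2 : (reducedDensity ψ ^ 2).trace = ∑ i : A, ∑ i' : A, ∑ j : B, ∑ j' : B,
      (ψ (i, j) * star (ψ (i, j'))) * (ψ (i', j') * star (ψ (i', j))) := by
    have : (reducedDensity ψ ^ 2).trace = ∑ j : B, ∑ j' : B, ∑ i : A, ∑ i' : A,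
        (ψ (i, j) * star (ψ (i, j'))) * (ψ (i', j') * star (ψ (i', j))) := by
      rw [sq]
      simp only [← Finset.sum_mul_sum]
      rfl
    rw [this]
    simp only [← Fintype.sum_prod_type']
    exact Fintype.sum_equiv
      ⟨fun x => (x.2.2.1, x.2.2.2, x.1, x.2.1), fun x => (x.2.2.1, x.2.2.2, x.1, x.2.1),
        fun _ => rfl, fun _ => rfl⟩ _ _ fun _ => rfl
  -- The same two sums with `j` and `j'` exchanged account for the factor `2`.
  have e1' : (reducedDensity ψ).trace ^ 2 = ∑ i : A, ∑ i' : A, ∑ j : B, ∑ j' : B,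
      (ψ (i, j') * star (ψ (i, j'))) * (ψ (i', j) * star (ψ (i', j))) := by
    rw [e1]
    exact Finset.sum_congr rfl fun i _ => Finset.sum_congr rfl fun i' _ => Finset.sum_comm
  have e2' : (reducedDensity ψ ^ 2).trace = ∑ i : A, ∑ i' : A, ∑ j : B, ∑ j' : B,
      (ψ (i, j') * star (ψ (i, j))) * (ψ (i', j) * star (ψ (i', j'))) := by
    rw [e2]
    exact Finset.sum_congr rfl fun i _ => Finset.sum_congr rfl fun i' _ => Finset.sum_comm
  have e : 2 * ((reducedDensity ψ).trace ^ 2 - (reducedDensity ψ ^ 2).trace)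
      = (reducedDensity ψ).trace ^ 2 + (reducedDensity ψ).trace ^ 2
        - (reducedDensity ψ ^ 2).trace - (reducedDensity ψ ^ 2).trace := by ring
  rw [e]
  nth_rewrite 1 [e1]
  nth_rewrite 1 [e1']
  nth_rewrite 1 [e2]
  rw [e2']
  simp only [← Finset.sum_add_distrib, ← Finset.sum_sub_distrib, Complex.ofReal_sum]
  refine Finset.sum_congr rfl fun i _ => Finset.sum_congr rfl fun i' _ =>
    Finset.sum_congr rfl fun j _ => Finset.sum_congr rfl fun j' _ => ?_
  rw [Complex.ofReal_pow, ← Complex.mul_conj', starRingEnd_apply, star_sub, star_mul', star_mul']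
  ring

/-- A bipartite pure state `ψ` is a product state if and only if all the
cycle-index coefficients of its reduced density matrix are equal to 1. -/
theorem product_state_iff_cycle_index_coeffs_one
    {A B : Type*} [Fintype A] [Fintype B] [DecidableEq B]
    (ψ : A × B → ℂ) (hψ : ∑ p : A × B, ‖ψ p‖ ^ 2 = 1) :
    (∃ (a : A → ℂ) (b : B → ℂ), ∀ i j, ψ (i, j) = a i * b j) ↔
      ∀ n : ℕ, cycleIndexCoeff (reducedDensity ψ) n = 1 := by
  classical
  have htr := trace_reducedDensity ψ hψ
  constructor
  · rintro ⟨a, b, hab⟩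
    apply cycleIndexCoeff_eq_one_of_trace_pow
    set s : ℂ := ∑ i : A, a i * star (a i) with hs
    have hρ : reducedDensity ψ = s • Matrix.vecMulVec b (star b) := by
      ext j j'
      simp only [reducedDensity, Matrix.of_apply, hab, Matrix.smul_apply, Matrix.vecMulVec_apply,
        smul_eq_mul, hs, Finset.sum_mul, Pi.star_apply, starRingEnd_apply, star_mul']
      exact Finset.sum_congr rfl fun i _ => by ring
    have hsb : s * (star b ⬝ᵥ b) = 1 := by
      rw [← htr, hρ, Matrix.trace_smul, Matrix.trace_vecMulVec, dotProduct_comm, smul_eq_mul]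
    have hidem : IsIdempotentElem (reducedDensity ψ) := by
      unfold IsIdempotentElem
      rw [hρ, Matrix.smul_mul, Matrix.mul_smul, Matrix.vecMulVec_mul_vecMulVec]
      ext j j'
      simp only [Matrix.smul_apply, Matrix.vecMulVec_apply, smul_eq_mul, Pi.smul_apply]
      linear_combination (s * (b j * star b j')) * hsb
    intro k
    rw [hidem.pow_succ_eq, htr]
  · intro h
    have h2 := h 2
    rw [cycleIndexCoeff_two, htr] at h2
    have hpure : (reducedDensity ψ ^ 2).trace = 1 := by linear_combination 2 * h2
    have hsum := sum_norm_minor_sq ψ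
    rw [htr, hpure, one_pow, sub_self, mul_zero, Complex.ofReal_eq_zero] at hsum
    have hminor : ∀ i i' j j', ψ (i, j) * ψ (i', j') = ψ (i, j') * ψ (i', j) := by
      intro i i' j j'
      simp only [← Fintype.sum_prod_type'] at hsum
      have := (Finset.sum_eq_zero_iff_of_nonneg (fun _ _ => by positivity)).1 hsum
        (i, i', j, j') (Finset.mem_univ _)
      exact sub_eq_zero.1 (norm_eq_zero.1 (pow_eq_zero_iff two_ne_zero |>.1 this))
    obtain ⟨⟨i₀, j₀⟩, h0⟩ : ∃ p, ψ p ≠ 0 := by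
      by_contra! hz
      simp [hz] at hψ
    refine ⟨fun i => ψ (i, j₀), fun j => ψ (i₀, j) / ψ (i₀, j₀), fun i j => ?_⟩
    rw [← mul_div_assoc, eq_div_iff h0]
    exact hminor i i₀ j j₀
end
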